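/- Let n ≥ 1 and for each i ∈ {1,…,n} let ρ_i^0, ρ_i^1 be density matrices on ℂ^{d_i}. For x ∈ {0,1}^n let ρ^x be the tensor product state, i.e. the matrix indexed by tuples u, v ∈ ∏_i Fin(d_i) with entries ρ^x(u,v) = ∏_{i=1}^n ρ_i^{x_i}(u_i, v_i). Then the maximal guessing probability of a uniformly random x ∈ {0,1}^n from ρ^x equals the product of the individual maximal guessing probabilities: sup over POVMs (M_x)_{x∈{0,1}^n} of 2^{−n} ∑_x Tr(M_x ρ^x) = ∏_{i=1}^n [ sup over POVMs (N_0, N_1) on ℂ^{d_i} of (1/2)(Tr(N_0 ρ_i^0) + Tr(N_1 ρ_i^1)) ]. -/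

import Mathlib

/-!
Let `σ x = P x • ρ x`. A POVM `M` maximizes the success probability `∑ x, tr (M x * σ x)` if and
only if its Lagrange operator `L = ∑ y, M y * σ y` dominates every `σ x` in the Loewner order
(Holevo; Yuen, Kennedy and Lax). If it does, then `tr (N x * σ x) ≤ tr (N x * L)` for every POVM
`N`, and the right-hand sides add up to `tr L`. Conversely, near a maximizer `M` one may replace
`M y` by `(1 - ε Q) M y (1 - ε Q)`, where `Q = v vᴴ`, and give the missing mass `1 - (1 - ε Q)²` to
the outcome `x`; to first order in `ε` this changes the success probability by
`2 ε (⟨v, σ x v⟩ - Re ⟨v, L v⟩)`, so the bracket is at most `0`. Complementary slackness then shows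
that `L` is Hermitian. A maximizer exists by compactness.

These optimality conditions are preserved by tensor products, since the Lagrange operator of a
tensor product is the tensor product of the Lagrange operators and `⨂ σ i (x i) ≤ ⨂ L i` whenever
`0 ≤ σ i (x i) ≤ L i` for every `i`. Taking traces gives the multiplicativity of the guessing
probability.
-/

open scoped BigOperators ComplexOrder

/-- The maximal probability of guessing `x` from the state `ρ x`, where `x` is
distributed according to `P`, optimized over all POVMs indexed by `X`. -/
noncomputable def guessProb {X I : Type} [Fintype X] [Fintype I] [DecidableEq I]
    (P : X → ℝ) (ρ : X → Matrix I I ℂ) : ℝ :=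
  sSup { p : ℝ | ∃ M : X → Matrix I I ℂ,
    (∀ x, (M x).PosSemidef) ∧ (∑ x, M x) = 1 ∧
    p = ∑ x, P x * ((M x * ρ x).trace).re }

open Matrix Filter
open scoped ComplexStarModule MatrixOrder Topology

section LoewnerOrder

variable {𝕜 I : Type*} [RCLike 𝕜] [Fintype I] {A B : Matrix I I 𝕜}

lemma star_trace_mul (hA : A.IsHermitian) (hB : B.IsHermitian) :
    star (A * B).trace = (A * B).trace := by
  rw [← trace_conjTranspose, conjTranspose_mul, hA.eq, hB.eq, trace_mul_comm]

lemma trace_mul_nonneg (hA : 0 ≤ A) (hB : 0 ≤ B) : 0 ≤ (A * B).trace := by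
  classical
  obtain ⟨C, rfl⟩ := CStarAlgebra.nonneg_iff_eq_star_mul_self.mp hA
  rw [mul_assoc, trace_mul_comm]
  exact (star_right_conjugate_nonneg hB C).posSemidef.trace_nonneg

lemma mul_eq_zero_of_trace_mul_eq_zero (hA : 0 ≤ A) (hB : 0 ≤ B) (h : (A * B).trace = 0) :
    A * B = 0 := by
  classical
  obtain ⟨C, rfl⟩ := CStarAlgebra.nonneg_iff_eq_star_mul_self.mp hA
  obtain ⟨D, rfl⟩ := CStarAlgebra.nonneg_iff_eq_star_mul_self.mp hB
  have hCD : C * star D = 0 := by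
    rw [← trace_conjTranspose_mul_self_eq_zero_iff, ← h, ← mul_assoc _ (star D) D,
      trace_mul_comm _ D]
    simp only [star_eq_conjTranspose, conjTranspose_mul, conjTranspose_conjTranspose, mul_assoc]
  rw [mul_assoc, ← mul_assoc C, hCD, zero_mul, mul_zero]

lemma nonneg_of_forall_re_trace_vecMulVec_mul_nonneg (hA : A.IsHermitian)
    (h : ∀ v : I → 𝕜, 0 ≤ RCLike.re (vecMulVec v (star v) * A).trace) : 0 ≤ A := by
  refine (PosSemidef.of_dotProduct_mulVec_nonneg hA fun v => ?_).nonneg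
  rw [dotProduct_mulVec, dotProduct_comm, ← trace_vecMulVec, ← vecMulVec_mul, RCLike.nonneg_iff]
  refine ⟨h v, RCLike.conj_eq_iff_im.mp (star_trace_mul ?_ hA)⟩
  exact (posSemidef_vecMulVec_self_star v).isHermitian

end LoewnerOrder

section ComplexMatrix

variable {I : Type*} [Fintype I]

lemma vecMulVec_star_mul_self (v : I → ℂ) :
    vecMulVec v (star v) * vecMulVec v (star v) = (star v ⬝ᵥ v).re • vecMulVec v (star v) := by
  have hreal : ((star v ⬝ᵥ v).re : ℂ) = star v ⬝ᵥ v :=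
    Complex.conj_eq_iff_re.mp (star_dotProduct v v).symm
  rw [vecMulVec_mul_vecMulVec, vecMulVec_smul, ← Complex.coe_smul, hreal]

lemma re_trace_mul_realPart {Q : Matrix I I ℂ} (hQ : Q.IsHermitian) (A : Matrix I I ℂ) :
    (Q * (ℜ A : Matrix I I ℂ)).trace.re = (Q * A).trace.re := by
  have hstar : (Q * star A).trace = star (Q * A).trace := by
    rw [← trace_conjTranspose, conjTranspose_mul, hQ.eq, trace_mul_comm, star_eq_conjTranspose]
  rw [realPart_apply_coe, mul_smul_comm, mul_add, trace_smul, trace_add, hstar, Complex.smul_re,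
    Complex.add_re, Complex.star_def, Complex.conj_re, smul_eq_mul]
  ring

lemma trace_realPart (A : Matrix I I ℂ) : (ℜ A : Matrix I I ℂ).trace = (A.trace.re : ℂ) := by
  rw [realPart_apply_coe, trace_smul, trace_add, star_eq_conjTranspose, trace_conjTranspose,
    Complex.star_def, Complex.add_conj, Complex.real_smul]
  push_cast
  ring

end ComplexMatrix

section POVM

variable {X I : Type*} [Fintype X] [DecidableEq I]

/-- A positive operator-valued measure with finite outcome set `X`, given by its effects. -/
structure IsPOVM (M : X → Matrix I I ℂ) : Prop where
  nonneg : ∀ x, 0 ≤ M x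
  sum_eq_one : ∑ x, M x = 1

lemma IsPOVM.le_one {M : X → Matrix I I ℂ} (hM : IsPOVM M) (x : X) : M x ≤ 1 :=
  hM.sum_eq_one ▸ Finset.single_le_sum (fun y _ => hM.nonneg y) (Finset.mem_univ x)

lemma isPOVM_single [DecidableEq X] (x : X) : IsPOVM (Pi.single x 1 : X → Matrix I I ℂ) where
  nonneg y := by
    have hsingle : 0 ≤ (Pi.single x 1 : X → Matrix I I ℂ) :=
      Pi.single_nonneg.mpr PosSemidef.one.nonneg
    exact hsingle y
  sum_eq_one := by
    rw [Finset.sum_pi_single', if_pos (Finset.mem_univ x)]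

open scoped Matrix.Norms.L2Operator in
lemma isCompact_setOf_isPOVM [Finite I] : IsCompact {M : X → Matrix I I ℂ | IsPOVM M} := by
  have := Fintype.ofFinite I
  have hclosed : IsClosed {M : X → Matrix I I ℂ | IsPOVM M} := by
    have hinter : {M : X → Matrix I I ℂ | IsPOVM M} = Set.Ici 0 ∩ {M | ∑ x, M x = 1} :=
      Set.ext fun M => ⟨fun h => ⟨h.nonneg, h.sum_eq_one⟩, fun h => ⟨h.1, h.2⟩⟩
    rw [hinter]
    exact isClosed_Ici.inter (isClosed_eq (by fun_prop) continuous_const)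
  have hbounded : {M : X → Matrix I I ℂ | IsPOVM M} ⊆ Metric.closedBall 0 1 := fun M hM => by
    rw [mem_closedBall_zero_iff, pi_norm_le_iff_of_nonneg zero_le_one]
    exact fun x => (CStarAlgebra.norm_le_one_iff_of_nonneg _ (hM.nonneg x)).mpr (hM.le_one x)
  have := FiniteDimensional.proper ℂ (X → Matrix I I ℂ)
  exact (isCompact_closedBall 0 1).of_isClosed_subset hclosed hbounded

variable [Fintype I]

lemma one_sub_smul_mul_self {Q : Matrix I I ℂ} {c : ℝ} (hQQ : Q * Q = c • Q) (ε : ℝ) :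
    (1 - ε • Q) * (1 - ε • Q) = 1 - (ε * (2 - ε * c)) • Q := by
  rw [sub_mul, one_mul, mul_sub, mul_one, smul_mul_assoc, mul_smul_comm, hQQ]
  module

lemma IsPOVM.conj_one_sub_smul_add_single [DecidableEq X] {M : X → Matrix I I ℂ} (hM : IsPOVM M)
    {Q : Matrix I I ℂ} (hQ : 0 ≤ Q) {c : ℝ} (hQQ : Q * Q = c • Q) {ε : ℝ} (hε : 0 ≤ ε)
    (hεc : ε * c ≤ 2) (x : X) :
    IsPOVM ((fun y => (1 - ε • Q) * M y * (1 - ε • Q)) + Pi.single x ((ε * (2 - ε * c)) • Q)) where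
  nonneg y := by
    have hconj : 0 ≤ (1 - ε • Q) * M y * (1 - ε • Q) :=
      ((IsSelfAdjoint.one _).sub (IsSelfAdjoint.smul (.all ε) hQ.isSelfAdjoint)).conjugate_nonneg
        (hM.nonneg y)
    have hrest : 0 ≤ (Pi.single x ((ε * (2 - ε * c)) • Q) : X → Matrix I I ℂ) :=
      Pi.single_nonneg.mpr (hQ.posSemidef.smul (mul_nonneg hε (sub_nonneg.mpr hεc))).nonneg
    exact add_nonneg hconj (hrest y)
  sum_eq_one := by
    simp only [Pi.add_apply]
    rw [Finset.sum_add_distrib, ← Finset.sum_mul, ← Finset.mul_sum, hM.sum_eq_one, mul_one,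
      one_sub_smul_mul_self hQQ, Finset.sum_pi_single', if_pos (Finset.mem_univ x),
      sub_add_cancel]

end POVM

section OptimalityConditions

variable {X I : Type*} [Fintype X] [Fintype I]

/-- The Lagrange operator `∑ x, M x * σ x` of a measurement `M` and a family `σ` of weighted states.
The real part of its trace is the success probability of `M`. -/
def lagrangeOperator (σ M : X → Matrix I I ℂ) : Matrix I I ℂ :=
  ∑ x, M x * σ x

lemma trace_lagrangeOperator (σ M : X → Matrix I I ℂ) :
    (lagrangeOperator σ M).trace = ∑ x, (M x * σ x).trace :=
  trace_sum _ _

lemma lagrangeOperator_add (σ M N : X → Matrix I I ℂ) :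
    lagrangeOperator σ (M + N) = lagrangeOperator σ M + lagrangeOperator σ N := by
  simp only [lagrangeOperator, Pi.add_apply, add_mul, Finset.sum_add_distrib]

lemma lagrangeOperator_single [DecidableEq X] (σ : X → Matrix I I ℂ) (x : X) (A : Matrix I I ℂ) :
    lagrangeOperator σ (Pi.single x A) = A * σ x := by
  rw [lagrangeOperator, Fintype.sum_eq_single x fun y hy => by rw [Pi.single_eq_of_ne hy, zero_mul],
    Pi.single_eq_same]

variable [DecidableEq I] {σ M : X → Matrix I I ℂ} {K : Matrix I I ℂ}

lemma IsPOVM.trace_sub_trace_lagrangeOperator (hM : IsPOVM M) :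
    K.trace - (lagrangeOperator σ M).trace = ∑ x, (M x * (K - σ x)).trace := by
  simp only [trace_lagrangeOperator, mul_sub, trace_sub, Finset.sum_sub_distrib]
  rw [← trace_sum Finset.univ fun x => M x * K, ← Finset.sum_mul, hM.sum_eq_one, one_mul]

lemma IsPOVM.trace_lagrangeOperator_le (hM : IsPOVM M) (hK : ∀ x, σ x ≤ K) :
    (lagrangeOperator σ M).trace ≤ K.trace := by
  rw [← sub_nonneg, hM.trace_sub_trace_lagrangeOperator]
  exact Finset.sum_nonneg fun x _ => trace_mul_nonneg (hM.nonneg x) (sub_nonneg.mpr (hK x))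

/-- Complementary slackness: each `M x * (K - σ x)` vanishes. -/
lemma IsPOVM.lagrangeOperator_eq_of_trace_eq (hM : IsPOVM M) (hK : ∀ x, σ x ≤ K)
    (htr : (lagrangeOperator σ M).trace = K.trace) : lagrangeOperator σ M = K := by
  have hdiff : ∀ x, 0 ≤ K - σ x := fun x => sub_nonneg.mpr (hK x)
  have hsum : ∑ x, (M x * (K - σ x)).trace = 0 := by
    rw [← hM.trace_sub_trace_lagrangeOperator, htr, sub_self]
  rw [Finset.sum_eq_zero_iff_of_nonneg fun x _ => trace_mul_nonneg (hM.nonneg x) (hdiff x)] at hsum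
  have hslack : ∀ x, M x * σ x = M x * K := fun x => by
    rw [eq_comm, ← sub_eq_zero, ← mul_sub]
    exact mul_eq_zero_of_trace_mul_eq_zero (hM.nonneg x) (hdiff x) (hsum x (Finset.mem_univ x))
  rw [lagrangeOperator, Finset.sum_congr rfl fun x _ => hslack x, ← Finset.sum_mul, hM.sum_eq_one,
    one_mul]

lemma IsPOVM.ofReal_re_trace_lagrangeOperator (hM : IsPOVM M) (hσ : ∀ x, (σ x).IsHermitian) :
    ((lagrangeOperator σ M).trace.re : ℂ) = (lagrangeOperator σ M).trace := by
  rw [← Complex.conj_eq_iff_re, trace_lagrangeOperator, map_sum]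
  exact Finset.sum_congr rfl fun x _ => star_trace_mul (hM.nonneg x).posSemidef.isHermitian (hσ x)

/-- A POVM satisfying the optimality conditions of Holevo and of Yuen, Kennedy and Lax for guessing
`x` from the weighted state `σ x`. -/
structure IsHolevoOptimal (σ M : X → Matrix I I ℂ) : Prop extends IsPOVM M where
  le_lagrangeOperator : ∀ x, σ x ≤ lagrangeOperator σ M

lemma re_trace_conj_one_sub_smul_mul {Q A B : Matrix I I ℂ} (hQ : Q.IsHermitian)
    (hA : A.IsHermitian) (hB : B.IsHermitian) (ε : ℝ) :
    ((1 - ε • Q) * A * (1 - ε • Q) * B).trace.re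
      = (A * B).trace.re - 2 * ε * (Q * (A * B)).trace.re + ε ^ 2 * (Q * A * Q * B).trace.re := by
  have hswap : (A * Q * B).trace.re = (Q * (A * B)).trace.re := by
    have hstar : (Q * (A * B)).trace = star (A * Q * B).trace := by
      rw [← trace_conjTranspose, conjTranspose_mul, conjTranspose_mul, hA.eq, hB.eq, hQ.eq,
        trace_mul_comm, mul_assoc, trace_mul_comm, mul_assoc]
    rw [hstar, Complex.star_def, Complex.conj_re]
  have hexpand : (1 - ε • Q) * A * (1 - ε • Q) * B
      = A * B - ε • (Q * (A * B)) - ε • (A * Q * B) + ε ^ 2 • (Q * A * Q * B) := by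
    simp only [sub_mul, mul_sub, one_mul, mul_one, smul_mul_assoc, mul_smul_comm, mul_assoc,
      smul_sub, smul_smul, sq]
    abel
  simp only [hexpand, trace_add, trace_sub, trace_smul, Complex.add_re, Complex.sub_re,
    Complex.real_smul, Complex.re_ofReal_mul, hswap]
  ring

lemma nonpos_of_eventually_mul_add_sq_mul_nonpos {a b : ℝ}
    (h : ∀ᶠ ε in 𝓝[>] (0 : ℝ), ε * a + ε ^ 2 * b ≤ 0) : a ≤ 0 := by
  have hlim : Tendsto (fun ε : ℝ => a + ε * b) (𝓝[>] 0) (𝓝 a) :=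
    tendsto_nhdsWithin_of_tendsto_nhds (Continuous.tendsto' (by fun_prop) _ _ (by simp))
  refine le_of_tendsto hlim ?_
  filter_upwards [h, self_mem_nhdsWithin] with ε hε hpos
  exact nonpos_of_mul_nonpos_right (by linarith) (Set.mem_Ioi.mp hpos)

lemma IsPOVM.re_trace_lagrangeOperator_conj_one_sub_smul (hM : IsPOVM M)
    (hσ : ∀ x, (σ x).IsHermitian) {Q : Matrix I I ℂ} (hQ : Q.IsHermitian) (ε : ℝ) :
    (lagrangeOperator σ fun y => (1 - ε • Q) * M y * (1 - ε • Q)).trace.re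
      = (lagrangeOperator σ M).trace.re - 2 * ε * (Q * lagrangeOperator σ M).trace.re
        + ε ^ 2 * ∑ y, (Q * M y * Q * σ y).trace.re := by
  simp only [trace_lagrangeOperator, Complex.re_sum, fun y =>
    re_trace_conj_one_sub_smul_mul hQ (hM.nonneg y).posSemidef.isHermitian (hσ y) ε]
  simp only [lagrangeOperator, Finset.mul_sum, trace_sum, Complex.re_sum, Finset.sum_add_distrib,
    Finset.sum_sub_distrib]

/-- The first-order condition in the direction of `Q`. -/
lemma IsPOVM.re_trace_mul_le_of_isMaxOn (hM : IsPOVM M) (hσ : ∀ x, (σ x).IsHermitian)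
    (hmax : IsMaxOn (fun N => (lagrangeOperator σ N).trace.re) {N | IsPOVM N} M)
    {Q : Matrix I I ℂ} (hQ : 0 ≤ Q) {c : ℝ} (hQQ : Q * Q = c • Q) (x : X) :
    (Q * σ x).trace.re ≤ (Q * lagrangeOperator σ M).trace.re := by
  classical
  suffices 2 * ((Q * σ x).trace.re - (Q * lagrangeOperator σ M).trace.re) ≤ 0 by linarith
  refine nonpos_of_eventually_mul_add_sq_mul_nonpos
    (b := ∑ y, (Q * M y * Q * σ y).trace.re - c * (Q * σ x).trace.re) ?_
  have hsmall : ∀ᶠ ε in 𝓝[>] (0 : ℝ), ε * c ≤ 2 :=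
    Tendsto.eventually_le_const two_pos <|
      tendsto_nhdsWithin_of_tendsto_nhds (Continuous.tendsto' (by fun_prop) 0 0 (zero_mul c))
  filter_upwards [hsmall, self_mem_nhdsWithin] with ε hεc hε
  have hle := hmax (hM.conj_one_sub_smul_add_single hQ hQQ (le_of_lt hε) hεc x)
  simp only [Set.mem_ofPred_eq, lagrangeOperator_add, lagrangeOperator_single, smul_mul_assoc,
    trace_add, trace_smul, Complex.add_re, Complex.real_smul, Complex.re_ofReal_mul,
    hM.re_trace_lagrangeOperator_conj_one_sub_smul hσ hQ.posSemidef.isHermitian] at hle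
  linarith

theorem IsPOVM.isHolevoOptimal_of_isMaxOn (hM : IsPOVM M) (hσ : ∀ x, (σ x).IsHermitian)
    (hmax : IsMaxOn (fun N => (lagrangeOperator σ N).trace.re) {N | IsPOVM N} M) :
    IsHolevoOptimal σ M := by
  set L := lagrangeOperator σ M
  have hle : ∀ x, σ x ≤ ℜ L := fun x => by
    refine sub_nonneg.mp (nonneg_of_forall_re_trace_vecMulVec_mul_nonneg
      (IsHermitian.sub (ℜ L).2 (hσ x)) fun v => ?_)
    have hQ := posSemidef_vecMulVec_self_star v
    rw [mul_sub, trace_sub, map_sub, sub_nonneg, RCLike.re_eq_complex_re,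
      re_trace_mul_realPart hQ.isHermitian]
    exact hM.re_trace_mul_le_of_isMaxOn hσ hmax hQ.nonneg (vecMulVec_star_mul_self v) x
  have htr : L.trace = (ℜ L : Matrix I I ℂ).trace := by
    rw [trace_realPart, hM.ofReal_re_trace_lagrangeOperator hσ]
  exact ⟨hM, fun x => (hle x).trans_eq (hM.lagrangeOperator_eq_of_trace_eq hle htr).symm⟩

theorem exists_isHolevoOptimal [Nonempty X] (hσ : ∀ x, (σ x).IsHermitian) :
    ∃ M, IsHolevoOptimal σ M := by
  classical
  have hcont : Continuous fun N : X → Matrix I I ℂ => (lagrangeOperator σ N).trace.re := by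
    unfold lagrangeOperator
    fun_prop
  obtain ⟨M, hM, hmax⟩ := isCompact_setOf_isPOVM.exists_isMaxOn
    ⟨_, isPOVM_single (Classical.arbitrary X)⟩ hcont.continuousOn
  exact ⟨M, hM.isHolevoOptimal_of_isMaxOn hσ hmax⟩

end OptimalityConditions

section PiKronecker

variable {ι R : Type*} [Fintype ι] {l m n : ι → Type*}

/-- The Kronecker product `⨂ i, A i` of a finite family of matrices, with rows and columns indexed
by tuples. -/
def piKronecker [CommMonoid R] (A : ∀ i, Matrix (m i) (n i) R) :
    Matrix (∀ i, m i) (∀ i, n i) R :=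
  Matrix.of fun u v => ∏ i, A i (u i) (v i)

lemma piKronecker_one [CommMonoidWithZero R] [∀ i, DecidableEq (n i)] :
    piKronecker (fun i => (1 : Matrix (n i) (n i) R)) = 1 := by
  ext u v
  simp only [piKronecker, of_apply, one_apply, Finset.prod_ite_zero, Finset.prod_const_one,
    Finset.mem_univ, true_imp_iff, funext_iff]

lemma piKronecker_conjTranspose [CommSemiring R] [StarRing R] (A : ∀ i, Matrix (m i) (n i) R) :
    (piKronecker A)ᴴ = piKronecker fun i => (A i)ᴴ := by
  ext u v
  simp only [piKronecker, conjTranspose_apply, of_apply, star_prod]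

section Semiring

variable [CommSemiring R]

lemma piKronecker_smul {S : Type*} [CommSemiring S] [Algebra S R] (c : ι → S)
    (A : ∀ i, Matrix (m i) (n i) R) :
    piKronecker (fun i => c i • A i) = (∏ i, c i) • piKronecker A := by
  ext u v
  simp only [piKronecker, of_apply, Matrix.smul_apply, Algebra.smul_def, Finset.prod_mul_distrib,
    map_prod]

variable [DecidableEq ι]

lemma piKronecker_sum {X : ι → Type*} [∀ i, Fintype (X i)]
    (A : ∀ i, X i → Matrix (m i) (n i) R) :
    piKronecker (fun i => ∑ x, A i x) = ∑ x : ∀ i, X i, piKronecker fun i => A i (x i) := by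
  ext u v
  simp only [piKronecker, of_apply, Matrix.sum_apply, Fintype.prod_sum]

lemma piKronecker_mul_piKronecker [∀ i, Fintype (m i)] (A : ∀ i, Matrix (l i) (m i) R)
    (B : ∀ i, Matrix (m i) (n i) R) :
    piKronecker A * piKronecker B = piKronecker fun i => A i * B i := by
  ext u v
  simp only [piKronecker, mul_apply, of_apply, Fintype.prod_sum, Finset.prod_mul_distrib]

lemma trace_piKronecker [∀ i, Fintype (n i)] (A : ∀ i, Matrix (n i) (n i) R) :
    (piKronecker A).trace = ∏ i, (A i).trace := by
  simp only [piKronecker, trace, diag_apply, of_apply, Fintype.prod_sum]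

end Semiring

section Order

variable {𝕜 : Type*} [RCLike 𝕜] [∀ i, Finite (n i)] {A B : ∀ i, Matrix (n i) (n i) 𝕜}

lemma piKronecker_nonneg (hA : ∀ i, 0 ≤ A i) : 0 ≤ piKronecker A := by
  classical
  have := fun i => Fintype.ofFinite (n i)
  choose C hC using fun i => CStarAlgebra.nonneg_iff_eq_star_mul_self.mp (hA i)
  simp only [star_eq_conjTranspose] at hC
  rw [funext hC, ← piKronecker_mul_piKronecker, ← piKronecker_conjTranspose]
  exact (posSemidef_conjTranspose_mul_self _).nonneg

/-- Expand `⨂ i, (A i + (B i - A i))`: every summand is nonnegative, and one of them is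
`⨂ i, A i`. -/
lemma piKronecker_mono (hA : ∀ i, 0 ≤ A i) (hAB : ∀ i, A i ≤ B i) :
    piKronecker A ≤ piKronecker B := by
  classical
  let D (i : ι) (b : Bool) := if b then A i else B i - A i
  have hD : ∀ i b, 0 ≤ D i b := fun i b => by
    cases b
    exacts [sub_nonneg.mpr (hAB i), hA i]
  have hB : B = fun i => ∑ b, D i b := by
    funext i
    simp [D]
  calc piKronecker A = piKronecker fun i => D i true := rfl
    _ ≤ ∑ x : ι → Bool, piKronecker fun i => D i (x i) :=
      Finset.single_le_sum (f := fun x : ι → Bool => piKronecker fun i => D i (x i))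
        (fun x _ => piKronecker_nonneg fun i => hD i (x i)) (Finset.mem_univ fun _ => true)
    _ = piKronecker B := by rw [hB, piKronecker_sum]

end Order

end PiKronecker

section TensorProduct

variable {ι : Type*} [Fintype ι] [DecidableEq ι] {X I : ι → Type*} [∀ i, Fintype (X i)]

lemma lagrangeOperator_piKronecker [∀ i, Fintype (I i)] (σ M : ∀ i, X i → Matrix (I i) (I i) ℂ) :
    lagrangeOperator (fun x : ∀ i, X i => piKronecker fun i => σ i (x i))
        (fun x => piKronecker fun i => M i (x i))
      = piKronecker fun i => lagrangeOperator (σ i) (M i) := by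
  simp only [lagrangeOperator, piKronecker_mul_piKronecker, piKronecker_sum]

variable [∀ i, DecidableEq (I i)] {σ M : ∀ i, X i → Matrix (I i) (I i) ℂ}

lemma IsPOVM.piKronecker [∀ i, Finite (I i)] (hM : ∀ i, IsPOVM (M i)) :
    IsPOVM fun x : ∀ i, X i => piKronecker fun i => M i (x i) where
  nonneg x := piKronecker_nonneg fun i => (hM i).nonneg (x i)
  sum_eq_one := by
    rw [← piKronecker_sum, funext fun i => (hM i).sum_eq_one, piKronecker_one]

lemma IsHolevoOptimal.piKronecker [∀ i, Fintype (I i)] (hσ : ∀ i x, 0 ≤ σ i x)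
    (hM : ∀ i, IsHolevoOptimal (σ i) (M i)) :
    IsHolevoOptimal (fun x : ∀ i, X i => piKronecker fun i => σ i (x i))
      fun x => piKronecker fun i => M i (x i) where
  toIsPOVM := IsPOVM.piKronecker fun i => (hM i).toIsPOVM
  le_lagrangeOperator x := by
    rw [lagrangeOperator_piKronecker]
    exact piKronecker_mono (fun i => hσ i (x i)) fun i => (hM i).le_lagrangeOperator (x i)

end TensorProduct

lemma guessProb_eq_of_isHolevoOptimal {X I : Type} [Fintype X] [Fintype I] [DecidableEq I]
    {P : X → ℝ} {ρ M : X → Matrix I I ℂ} (hM : IsHolevoOptimal (fun x => P x • ρ x) M) :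
    guessProb P ρ = (lagrangeOperator (fun x => P x • ρ x) M).trace.re := by
  have hvalue : ∀ N : X → Matrix I I ℂ, ∑ x, P x * (N x * ρ x).trace.re
      = (lagrangeOperator (fun x => P x • ρ x) N).trace.re := fun N => by
    simp only [trace_lagrangeOperator, mul_smul_comm, trace_smul, Complex.re_sum, Complex.real_smul,
      Complex.re_ofReal_mul]
  refine IsGreatest.csSup_eq ⟨⟨M, fun x => (hM.nonneg x).posSemidef, hM.sum_eq_one, ?_⟩, ?_⟩
  · exact (hvalue M).symm
  · rintro p ⟨N, hN, hN1, rfl⟩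
    have hPOVM : IsPOVM N := ⟨fun x => (hN x).nonneg, hN1⟩
    rw [hvalue]
    exact (Complex.le_def.mp (hPOVM.trace_lagrangeOperator_le hM.le_lagrangeOperator)).1

theorem guessing_prob_tensor_product_general {ι : Type} [Fintype ι] [DecidableEq ι]
    {X I : ι → Type} [∀ i, Fintype (X i)] [∀ i, Nonempty (X i)] [∀ i, Fintype (I i)]
    [∀ i, DecidableEq (I i)] (P : ∀ i, X i → ℝ) (ρ : ∀ i, X i → Matrix (I i) (I i) ℂ)
    (hP : ∀ i x, 0 ≤ P i x) (hρ : ∀ i x, (ρ i x).PosSemidef) :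
    guessProb (fun x : ∀ i, X i => ∏ i, P i (x i)) (fun x => piKronecker fun i => ρ i (x i))
      = ∏ i, guessProb (P i) (ρ i) := by
  let σ i x := P i x • ρ i x
  have hσ : ∀ i x, (σ i x).PosSemidef := fun i x => (hρ i x).smul (hP i x)
  choose M hM using fun i => exists_isHolevoOptimal fun x => (hσ i x).isHermitian
  have hprod := IsHolevoOptimal.piKronecker (fun i x => (hσ i x).nonneg) hM
  have hweight : (fun x : ∀ i, X i => piKronecker fun i => σ i (x i))
      = fun x => (∏ i, P i (x i)) • piKronecker fun i => ρ i (x i) :=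
    funext fun x => piKronecker_smul (fun i => P i (x i)) fun i => ρ i (x i)
  have hreal : ∀ i, (guessProb (P i) (ρ i) : ℂ) = (lagrangeOperator (σ i) (M i)).trace := by
    intro i
    rw [guessProb_eq_of_isHolevoOptimal (hM i)]
    exact (hM i).ofReal_re_trace_lagrangeOperator fun x => (hσ i x).isHermitian
  rw [guessProb_eq_of_isHolevoOptimal (hweight ▸ hprod), ← hweight, lagrangeOperator_piKronecker,
    trace_piKronecker, ← Finset.prod_congr rfl fun i _ => hreal i, ← Complex.ofReal_prod,
    Complex.ofReal_re]

theorem guessing_prob_tensor_product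
    (n : ℕ) (hn : 1 ≤ n) (d : Fin n → ℕ)
    (ρ : (i : Fin n) → Bool → Matrix (Fin (d i)) (Fin (d i)) ℂ)
    (hρ : ∀ i b, (ρ i b).PosSemidef) (hρtr : ∀ i b, (ρ i b).trace = 1) :
    guessProb (fun _ : Fin n → Bool => ((2 : ℝ) ^ n)⁻¹)
      (fun x => Matrix.of fun u v : (i : Fin n) → Fin (d i) =>
        ∏ i, ρ i (x i) (u i) (v i))
    = ∏ i, guessProb (fun _ : Bool => 1 / 2) (ρ i) := by
  simpa [piKronecker] using
    guessing_prob_tensor_product_general (fun _ _ => 1 / 2) ρ (fun _ _ => one_half_pos.le) hρ
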